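/- For every real ε > 0 there exists a positive integer r₀ such that for every integer r ≥ r₀ there exists a distinct difference configuration D ⊆ ℤ² whose points have pairwise Manhattan distance at most r and with |D| ≥ (1/√2 − ε)·r. In other words, there exist DD̄(m,r) with m = r/√2 − o(r), matching asymptotically the upper bound m ≤ r/√2 + O(r^(2/3)). -/

import Mathlib

/-- Manhattan distance on ℤ². -/
def mdist (p q : ℤ × ℤ) : ℤ := |q.1 - p.1| + |q.2 - p.2|

/-- A set of points is a distinct difference configuration if all differences between
distinct pairs of its points are distinct. -/
def IsDDC {G : Type*} [Sub G] (D : Set G) : Prop :=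
  ∀ p₁ ∈ D, ∀ p₂ ∈ D, ∀ q₁ ∈ D, ∀ q₂ ∈ D,
    p₂ - p₁ = q₂ - q₁ → p₂ ≠ p₁ → p₁ = q₁ ∧ p₂ = q₂

/-!
The points whose diagonal coordinates `x + y` and `x - y` lie in `[0, r]` form a set `W` of about
`r ^ 2 / 2` points at pairwise Manhattan distance at most `r`. If `q` is a prime power slightly
larger than `r / √2`, an additive map `ℤ × ℤ → ℤ / (q ^ 2 - 1)` folds `W` injectively into a group
in which Bose's construction gives a distinct difference configuration of `q` elements. Averaging
over the translates of the latter, some preimage in `W` has at least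
`(r ^ 2 / 2) * q / (q ^ 2 - 1)`, hence about `r / √2`, points.

That there is a prime power in `[x, (1 + ε) x]` for all large `x` is a Tauberian statement. Since
`ζ` has no zero on the line `Re s = 1`, smoothing the von Mangoldt function against
`𝓕 φ (log n - L)` gives a sum which tends to `φ 0` as `L → ∞`. If `φ 0` is positive and `𝓕 φ` is
nonpositive outside `[-η, η]`, some prime power must have its logarithm within `η` of `L`.
-/

section DistinctDifferences

open Finset

namespace IsDDC

variable {G H : Type*} [AddGroup G] [AddGroup H] {A : Set H} {W : Set G}

theorem sep_add_mem (hA : IsDDC A) (f : G →+ H) (hf : Set.InjOn f W) (c : H) :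
    IsDDC {p ∈ W | f p + c ∈ A} := by
  rintro p₁ ⟨hp₁, hfp₁⟩ p₂ ⟨hp₂, hfp₂⟩ q₁ ⟨hq₁, hfq₁⟩ q₂ ⟨hq₂, hfq₂⟩ hsub hne
  have hsub_image : f p₂ + c - (f p₁ + c) = f q₂ + c - (f q₁ + c) := by
    simp only [add_sub_add_right_eq_sub, ← map_sub, hsub]
  have hne_image : f p₂ + c ≠ f p₁ + c :=
    fun h ↦ hne (hf hp₂ hp₁ (add_right_cancel h))
  obtain ⟨h₁, h₂⟩ := hA _ hfp₁ _ hfp₂ _ hfq₁ _ hfq₂ hsub_image hne_image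
  exact ⟨hf hp₁ hq₁ (add_right_cancel h₁), hf hp₂ hq₂ (add_right_cancel h₂)⟩

theorem preimage (hA : IsDDC A) (f : G →+ H) (hf : Function.Injective f) :
    IsDDC (f ⁻¹' A) := by
  simpa only [Set.mem_preimage, Set.mem_univ, true_and, add_zero] using!
    hA.sep_add_mem f (hf.injOn (s := Set.univ)) 0

end IsDDC

theorem exists_card_mul_card_le_card_mul_card_filter {ι H : Type*} [AddGroup H] [Fintype H]
    [DecidableEq H] (W : Finset ι) (f : ι → H) (A : Finset H) :
    ∃ c : H, #W * #A ≤ Fintype.card H * #{p ∈ W | f p + c ∈ A} := by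
  have card_shifts (p : ι) : #{c | f p + c ∈ A} = #A :=
    card_bijective (f p + ·) (AddGroup.addLeft_bijective _) (by simp)
  have sum_card : ∑ c : H, #{p ∈ W | f p + c ∈ A} = #W * #A := by
    calc ∑ c : H, #{p ∈ W | f p + c ∈ A} = ∑ p ∈ W, #{c | f p + c ∈ A} :=
          (sum_card_bipartiteAbove_eq_sum_card_bipartiteBelow _).symm
      _ = #W * #A := by simp_rw [card_shifts, sum_const, smul_eq_mul]
  by_contra! hlt
  have := sum_lt_sum_of_nonempty univ_nonempty fun c _ ↦ hlt c
  simp [← mul_sum, sum_card] at this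

theorem IsDDC.exists_subset_card_mul_card_le {G H : Type*} [AddGroup G] [AddGroup H] [Fintype H]
    {A : Finset H} (hA : IsDDC (A : Set H)) {W : Finset G} (f : G →+ H)
    (hf : Set.InjOn f W) :
    ∃ D ⊆ W, IsDDC (D : Set G) ∧ #W * #A ≤ Fintype.card H * #D := by
  classical
  obtain ⟨c, hc⟩ := exists_card_mul_card_le_card_mul_card_filter W f A
  refine ⟨{p ∈ W | f p + c ∈ A}, filter_subset _ _, ?_, hc⟩
  simpa using hA.sep_add_mem f hf c

section Bose

variable {F K : Type*} [Field F] [Field K] [Algebra F K] {θ : K}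

theorem add_algebraMap_mul_eq_imp (hθ : θ ∉ Set.range (algebraMap F K)) {a b c d : F}
    (h : (θ + algebraMap F K a) * (θ + algebraMap F K b) =
      (θ + algebraMap F K c) * (θ + algebraMap F K d)) :
    a = c ∧ b = d ∨ a = d ∧ b = c := by
  have linear_relation : algebraMap F K (a + b - c - d) * θ = algebraMap F K (c * d - a * b) := by
    simp only [map_add, map_sub, map_mul]
    linear_combination h
  have sum_eq : a + b - c - d = 0 := by
    by_contra hne
    refine hθ ⟨(c * d - a * b) / (a + b - c - d), ?_⟩
    rw [map_div₀, ← linear_relation, mul_div_cancel_left₀]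
    exact (map_ne_zero _).2 hne
  have prod_eq : c * d - a * b = 0 := by
    rw [sum_eq, map_zero, zero_mul] at linear_relation
    exact (map_eq_zero _).1 linear_relation.symm
  have root : (a - c) * (a - d) = 0 := by
    linear_combination a * sum_eq + prod_eq
  rcases mul_eq_zero.1 root with hac | had
  · exact .inl ⟨sub_eq_zero.1 hac, by linear_combination sum_eq - hac⟩
  · exact .inr ⟨sub_eq_zero.1 had, by linear_combination sum_eq - had⟩

theorem add_algebraMap_ne_zero (hθ : θ ∉ Set.range (algebraMap F K)) (a : F) :
    θ + algebraMap F K a ≠ 0 :=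
  fun h ↦ hθ ⟨-a, by rw [map_neg, eq_neg_of_add_eq_zero_left h]⟩

/-- Bose's unit `θ + a`, for `θ` in an extension of `F` and `a : F`; it lives in `Additive Kˣ` so
that quotients of units become the differences of `IsDDC`. -/
def boseUnit (hθ : θ ∉ Set.range (algebraMap F K)) (a : F) : Additive Kˣ :=
  .ofMul (.mk0 (θ + algebraMap F K a) (add_algebraMap_ne_zero hθ a))

theorem boseUnit_injective (hθ : θ ∉ Set.range (algebraMap F K)) :
    Function.Injective (boseUnit hθ) := by
  intro a b hab
  have : θ + algebraMap F K a = θ + algebraMap F K b := congrArg (fun x ↦ (x.toMul : K)) hab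
  exact (algebraMap F K).injective (add_left_cancel this)

theorem isDDC_range_boseUnit (hθ : θ ∉ Set.range (algebraMap F K)) :
    IsDDC (Set.range (boseUnit hθ)) := by
  rintro _ ⟨a₁, rfl⟩ _ ⟨a₂, rfl⟩ _ ⟨b₁, rfl⟩ _ ⟨b₂, rfl⟩ hsub hne
  have hmul : (θ + algebraMap F K a₂) * (θ + algebraMap F K b₁) =
      (θ + algebraMap F K b₂) * (θ + algebraMap F K a₁) :=
    congrArg (fun x ↦ (x.toMul : K)) (sub_eq_sub_iff_add_eq_add.1 hsub)
  rcases add_algebraMap_mul_eq_imp hθ hmul with ⟨rfl, rfl⟩ | ⟨rfl, -⟩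
  · exact ⟨rfl, rfl⟩
  · exact absurd rfl hne

theorem exists_isDDC_zmod_natCard_sub_one [Finite K] (hθ : θ ∉ Set.range (algebraMap F K)) :
    ∃ A : Finset (ZMod (Nat.card K - 1)),
      IsDDC (A : Set (ZMod (Nat.card K - 1))) ∧ #A = Nat.card F := by
  classical
  have : Finite F := .of_injective _ (algebraMap F K).injective
  have := Fintype.ofFinite F
  let e : ZMod (Nat.card K - 1) ≃+ Additive Kˣ :=
    addEquivOfAddCyclicCardEq
      (by rw [Nat.card_zmod, Nat.card_congr Additive.toMul, Nat.card_units])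
  refine ⟨univ.image (e.symm ∘ boseUnit hθ), ?_, ?_⟩
  · have coe_image : (univ.image (e.symm ∘ boseUnit hθ) : Set (ZMod (Nat.card K - 1))) =
        e ⁻¹' Set.range (boseUnit hθ) := by
      rw [coe_image, coe_univ, Set.image_univ, Set.range_comp]
      exact e.symm.toEquiv.image_eq_preimage_symm _
    rw [coe_image]
    exact (isDDC_range_boseUnit hθ).preimage e.toAddMonoidHom e.injective
  · rw [card_image_of_injective _ (e.symm.injective.comp (boseUnit_injective hθ)), card_univ,
      Nat.card_eq_fintype_card]

end Bose

theorem exists_isDDC_zmod_sq_sub_one {q : ℕ} (hq : IsPrimePow q) :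
    ∃ A : Finset (ZMod (q ^ 2 - 1)), IsDDC (A : Set (ZMod (q ^ 2 - 1))) ∧ #A = q := by
  obtain ⟨p, k, hp, hk, rfl⟩ := (isPrimePow_nat_iff _).1 hq
  have : Fact p.Prime := ⟨hp⟩
  have card_F : Nat.card (GaloisField p k) = p ^ k := GaloisField.card p k hk.ne'
  have card_K : Nat.card (FiniteField.Extension (GaloisField p k) p 2) = (p ^ k) ^ 2 := by
    rw [FiniteField.natCard_extension, card_F]
  obtain ⟨θ, hθ⟩ : ∃ θ, θ ∉
      Set.range (algebraMap (GaloisField p k) (FiniteField.Extension (GaloisField p k) p 2)) := by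
    by_contra! hsurj
    have card_le := Nat.card_le_card_of_surjective _ hsurj
    rw [card_F, card_K] at card_le
    exact card_le.not_gt (lt_self_pow₀ hq.one_lt one_lt_two)
  have h := exists_isDDC_zmod_natCard_sub_one hθ
  rwa [card_F, card_K] at h

/-- The points whose two diagonal coordinates `x + y` and `x - y` lie in `[0, r]`: a translate of
the ball of radius `r / 2` for the Manhattan distance. -/
noncomputable def diamond (r : ℕ) : Finset (ℤ × ℤ) :=
  {p ∈ Icc 0 (r : ℤ) ×ˢ Icc (-r : ℤ) r | p.1 + p.2 ∈ Icc 0 (r : ℤ) ∧ p.1 - p.2 ∈ Icc 0 (r : ℤ)}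

theorem mem_diamond {r : ℕ} {p : ℤ × ℤ} :
    p ∈ diamond r ↔ p.1 + p.2 ∈ Set.Icc 0 (r : ℤ) ∧ p.1 - p.2 ∈ Set.Icc 0 (r : ℤ) := by
  simp only [diamond, mem_filter, mem_product, mem_Icc, Set.mem_Icc]
  omega

theorem mdist_le_of_mem_diamond {r : ℕ} {p q : ℤ × ℤ} (hp : p ∈ diamond r) (hq : q ∈ diamond r) :
    mdist p q ≤ r := by
  simp only [mem_diamond, Set.mem_Icc, mdist] at *
  rcases abs_cases (q.1 - p.1) with h | h <;> rcases abs_cases (q.2 - p.2) with h' | h' <;> omega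

theorem sq_le_two_mul_card_diamond (r : ℕ) : r ^ 2 ≤ 2 * #(diamond r) := by
  have card_le : #(range (r + 1) ×ˢ range ((r + 1) / 2)) ≤ #(diamond r) := by
    -- The points on the diagonal `x + y = i` are `(⌈i / 2⌉ + j, ⌊i / 2⌋ - j)`, and these have
    -- `x - y ∈ {2 * j, 2 * j + 1}`.
    refine card_le_card_of_injOn
      (fun ij ↦ (((ij.1 + 1) / 2 + ij.2 : ℤ), (ij.1 / 2 - ij.2 : ℤ))) ?_ ?_
    · rintro ⟨i, j⟩ hij
      simp only [coe_product, coe_range, Set.mem_prod, Set.mem_Iio, mem_coe, mem_diamond,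
        Set.mem_Icc] at hij ⊢
      omega
    · rintro ⟨i, j⟩ - ⟨i', j'⟩ - heq
      simp only [Prod.mk.injEq] at heq ⊢
      omega
  rw [card_product, card_range, card_range] at card_le
  have half_bound : r ≤ 2 * ((r + 1) / 2) := by omega
  nlinarith

/-- The folding `(s, d) ↦ ((2 * m + 1) * s + d) / 2` of the diagonal coordinates `s = x + y` and
`d = x - y` into `ℤ`; as `s ≡ d [ZMOD 2]`, the division is exact. -/
def foldHom (m : ℤ) : ℤ × ℤ →+ ℤ where
  toFun p := m * (p.1 + p.2) + p.1
  map_zero' := by simp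
  map_add' p q := by simp only [Prod.fst_add, Prod.snd_add]; ring

theorem foldHom_apply (m : ℤ) (p : ℤ × ℤ) : foldHom m p = m * (p.1 + p.2) + p.1 := rfl

theorem injOn_foldHom_diamond {r : ℕ} {m : ℤ} (hm : r ≤ 2 * m) :
    Set.InjOn (foldHom m) (diamond r) := by
  intro p hp p' hp' heq
  simp only [mem_coe, mem_diamond, Set.mem_Icc, foldHom_apply] at hp hp' heq
  have dvd_diff : 2 * m + 1 ∣ (p'.1 - p'.2) - (p.1 - p.2) :=
    ⟨(p.1 + p.2) - (p'.1 + p'.2), by linear_combination -2 * heq⟩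
  have diff_eq : (p'.1 - p'.2) - (p.1 - p.2) = 0 :=
    Int.eq_zero_of_abs_lt_dvd dvd_diff (abs_lt.2 ⟨by omega, by omega⟩)
  have sum_eq : (2 * m + 1) * ((p.1 + p.2) - (p'.1 + p'.2)) = 0 := by
    linear_combination 2 * heq + diff_eq
  have : p.1 + p.2 - (p'.1 + p'.2) = 0 := (mul_eq_zero.1 sum_eq).resolve_left (by omega)
  ext <;> omega

theorem abs_foldHom_sub_le {r : ℕ} {m : ℤ} (hm : 0 ≤ m) {p p' : ℤ × ℤ} (hp : p ∈ diamond r)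
    (hp' : p' ∈ diamond r) : |foldHom m p - foldHom m p'| ≤ r * (m + 1) := by
  simp only [mem_diamond, Set.mem_Icc] at hp hp'
  calc |foldHom m p - foldHom m p'|
      = |m * ((p.1 + p.2) - (p'.1 + p'.2)) + (p.1 - p'.1)| := by
        simp only [foldHom_apply]; ring_nf
    _ ≤ |m * ((p.1 + p.2) - (p'.1 + p'.2))| + |p.1 - p'.1| := abs_add_le _ _
    _ = m * |(p.1 + p.2) - (p'.1 + p'.2)| + |p.1 - p'.1| := by rw [abs_mul, abs_of_nonneg hm]
    _ ≤ m * r + r := by gcongr <;> exact abs_le.2 ⟨by omega, by omega⟩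
    _ = r * (m + 1) := by ring

theorem injOn_intCast_foldHom_diamond {r n : ℕ} {m : ℤ} (hm : r ≤ 2 * m) (hn : r * (m + 1) < n) :
    Set.InjOn ((Int.castAddHom (ZMod n)).comp (foldHom m)) (diamond r) := by
  intro p hp p' hp' heq
  have dvd_sub : (n : ℤ) ∣ foldHom m p' - foldHom m p :=
    (ZMod.intCast_eq_intCast_iff_dvd_sub _ _ n).1 heq
  have sub_eq_zero := Int.eq_zero_of_abs_lt_dvd dvd_sub
    ((abs_foldHom_sub_le (by omega) hp' hp).trans_lt hn)
  exact injOn_foldHom_diamond hm hp hp' (by omega)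

theorem exists_isDDC_mdist_le {q r : ℕ} (hq : IsPrimePow q) (hrq : (r + 2) ^ 2 ≤ 2 * q ^ 2) :
    ∃ D : Finset (ℤ × ℤ), IsDDC (D : Set (ℤ × ℤ)) ∧
      (∀ p ∈ D, ∀ p' ∈ D, mdist p p' ≤ r) ∧ r ^ 2 ≤ 2 * (q * #D) := by
  have hq_sq : 1 < q ^ 2 := one_lt_pow₀ hq.one_lt two_ne_zero
  have : NeZero (q ^ 2 - 1) := ⟨by omega⟩
  obtain ⟨A, hA, card_A⟩ := exists_isDDC_zmod_sq_sub_one hq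
  have fold_injOn : Set.InjOn
      ((Int.castAddHom (ZMod (q ^ 2 - 1))).comp (foldHom ((r + 1) / 2))) (diamond r) := by
    refine injOn_intCast_foldHom_diamond (by omega) ?_
    have two_mul_le : 2 * ((r + 1 : ℤ) / 2) ≤ r + 1 := by omega
    have hrq_int : (r + 2 : ℤ) ^ 2 ≤ 2 * q ^ 2 := mod_cast hrq
    push_cast [hq_sq.le]
    nlinarith [two_mul_le, hrq_int]
  obtain ⟨D, hDW, hD, hcard⟩ := hA.exists_subset_card_mul_card_le _ fold_injOn
  refine ⟨D, hD, fun p hp p' hp' ↦ mdist_le_of_mem_diamond (hDW hp) (hDW hp'), ?_⟩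
  rw [card_A, ZMod.card] at hcard
  refine Nat.le_of_mul_le_mul_right ?_ hq.pos
  calc r ^ 2 * q ≤ 2 * #(diamond r) * q := by gcongr; exact sq_le_two_mul_card_diamond r
    _ = 2 * (#(diamond r) * q) := mul_assoc ..
    _ ≤ 2 * (q ^ 2 * #D) :=
      Nat.mul_le_mul_left 2 (hcard.trans (Nat.mul_le_mul_right _ (Nat.sub_le ..)))
    _ = 2 * (q * #D) * q := by ring

end DistinctDifferences

open MeasureTheory Filter Topology FourierTransform Set
open Complex (I)
open SchwartzMap (derivCLM)
open scoped Real Convolution ContDiff SchwartzMap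

section Tauberian

variable {φ ψ : ℝ → ℂ}

theorem fourier_fourierChar_smul (φ : ℝ → ℂ) (L w : ℝ) :
    𝓕 (fun t ↦ 𝐞 (t * L) • φ t) w = 𝓕 φ (w - L) := by
  simp only [Real.fourier_real_eq, smul_smul, ← AddChar.map_add_eq_mul, mul_sub, neg_sub,
    neg_add_eq_sub]

theorem lSeriesTerm_add_two_pi_I_mul (f : ℕ → ℂ) (s : ℂ) (t : ℝ) (n : ℕ) :
    LSeries.term f (s + 2 * π * I * t) n =
      𝐞 (-(t * Real.log n)) • LSeries.term f s n := by
  rcases eq_or_ne n 0 with rfl | hn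
  · simp
  · have hn' : (n : ℂ) ≠ 0 := Nat.cast_ne_zero.2 hn
    rw [LSeries.term_of_ne_zero hn, LSeries.term_of_ne_zero hn, Complex.cpow_add _ _ hn',
      Complex.cpow_def_of_ne_zero hn' (2 * _ * _ * _), Circle.smul_def, Real.fourierChar_apply,
      ← div_div, div_eq_inv_mul, ← Complex.exp_neg, ← Complex.natCast_log, smul_eq_mul]
    push_cast
    ring_nf

theorem hasSum_lSeriesTerm_mul_fourier_log {f : ℕ → ℂ} {s : ℂ} (hf : LSeriesSummable f s)
    (hψ : Integrable ψ) :
    HasSum (fun n ↦ LSeries.term f s n * 𝓕 ψ (Real.log n))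
      (∫ t : ℝ, ψ t * LSeries f (s + 2 * π * I * t)) := by
  have norm_term (n : ℕ) (t : ℝ) :
      ‖ψ t * LSeries.term f (s + 2 * π * I * t) n‖ =
        ‖LSeries.term f s n‖ * ‖ψ t‖ := by
    rw [lSeriesTerm_add_two_pi_I_mul, norm_mul, Circle.norm_smul, mul_comm]
  have integral_term (n : ℕ) : ∫ t, ψ t * LSeries.term f (s + 2 * π * I * t) n =
      LSeries.term f s n * 𝓕 ψ (Real.log n) := by
    rw [Real.fourier_real_eq, ← integral_const_mul]
    congr with t
    rw [lSeriesTerm_add_two_pi_I_mul, mul_smul_comm, mul_smul_comm, mul_comm (ψ t)]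
  have integrable_term (n : ℕ) :
      Integrable fun t : ℝ ↦ ψ t * LSeries.term f (s + 2 * π * I * t) n := by
    refine (hψ.norm.const_mul ‖LSeries.term f s n‖).mono' ?_ (.of_forall fun t ↦ (norm_term n t).le)
    simp only [lSeriesTerm_add_two_pi_I_mul]
    fun_prop
  simp only [← integral_term, LSeries, ← tsum_mul_left]
  refine hasSum_integral_of_summable_integral_norm integrable_term ?_
  simp only [norm_term, integral_const_mul]
  exact hf.norm.mul_right _

theorem fourier_indicator_Ioi_exp_neg_mul {s : ℂ} (hs : 0 < s.re) (t : ℝ) :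
    𝓕 ((Ioi (0 : ℝ)).indicator fun u ↦ Complex.exp (-s * u)) t =
      1 / (s + 2 * π * I * t) := by
  have re_neg : (-(s + 2 * π * I * t)).re < 0 := by simpa using hs
  calc 𝓕 ((Ioi (0 : ℝ)).indicator fun u ↦ Complex.exp (-s * u)) t
      = ∫ u in Ioi (0 : ℝ), Complex.exp (-(s + 2 * π * I * t) * u) := by
        rw [Real.fourier_real_eq_integral_exp_smul, ← integral_indicator measurableSet_Ioi]
        congr! 2 with u
        by_cases hu : u ∈ Ioi (0 : ℝ)
        · simp only [indicator_of_mem hu, smul_eq_mul, ← Complex.exp_add]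
          push_cast
          ring_nf
        · simp only [indicator_of_notMem hu, smul_zero]
    _ = 1 / (s + 2 * π * I * t) := by
        rw [integral_exp_mul_complex_Ioi re_neg, Complex.ofReal_zero, mul_zero, Complex.exp_zero,
          neg_div_neg_eq]

theorem setIntegral_Ioi_exp_neg_mul_fourier (hψ : Integrable ψ) {s : ℂ} (hs : 0 < s.re) :
    ∫ u in Ioi (0 : ℝ), Complex.exp (-s * u) * 𝓕 ψ u =
      ∫ t : ℝ, ψ t * (1 / (s + 2 * π * I * t)) := by
  have exp_integrable :
      Integrable ((Ioi (0 : ℝ)).indicator fun u ↦ Complex.exp (-s * u)) :=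
    (integrableOn_exp_mul_complex_Ioi (by simpa using hs) 0).integrable_indicator measurableSet_Ioi
  have parseval : ∫ u, 𝓕 ψ u * (Ioi (0 : ℝ)).indicator (fun u ↦ Complex.exp (-s * u)) u =
      ∫ t, ψ t * 𝓕 ((Ioi (0 : ℝ)).indicator fun u ↦ Complex.exp (-s * u)) t := by
    simpa using! VectorFourier.integral_fourierIntegral_smul_eq_flip (L := innerₗ ℝ)
      Real.continuous_fourierChar continuous_inner hψ exp_integrable
  simp only [fourier_indicator_Ioi_exp_neg_mul hs] at parseval
  rw [← parseval, ← integral_indicator measurableSet_Ioi]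
  congr! 2 with u
  by_cases hu : u ∈ Ioi (0 : ℝ) <;> simp [hu, mul_comm]

theorem tendsto_setIntegral_Ioi_exp_neg_mul {g : ℝ → ℂ} (hg : IntegrableOn g (Ioi 0)) :
    Tendsto (fun δ : ℝ ↦ ∫ u in Ioi (0 : ℝ), Complex.exp (-δ * u) * g u) (𝓝[>] 0)
      (𝓝 (∫ u in Ioi (0 : ℝ), g u)) := by
  refine tendsto_integral_filter_of_dominated_convergence (‖g ·‖) ?_ ?_ hg.norm ?_
  · exact .of_forall fun δ ↦ (by fun_prop : Continuous _).aestronglyMeasurable.mul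
      hg.aestronglyMeasurable
  · filter_upwards [self_mem_nhdsWithin] with δ (hδ : 0 < δ)
    filter_upwards [ae_restrict_mem measurableSet_Ioi] with u (hu : 0 < u)
    rw [norm_mul]
    refine mul_le_of_le_one_left (norm_nonneg _) ?_
    simpa [Complex.norm_exp] using (mul_pos hδ hu).le
  · refine .of_forall fun u ↦ tendsto_nhdsWithin_of_tendsto_nhds ?_
    have : Continuous fun δ : ℝ ↦ Complex.exp (-δ * u) * g u := by fun_prop
    simpa using this.tendsto 0

theorem tendsto_integral_mul_add_two_pi_I_mul {F : ℂ → ℂ} {x : ℝ}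
    (hF : ContinuousOn F {s | x ≤ s.re}) (hψ : Continuous ψ) (hψ_supp : HasCompactSupport ψ) :
    Tendsto (fun σ : ℝ ↦ ∫ t : ℝ, ψ t * F (σ + 2 * π * I * t)) (𝓝[>] x)
      (𝓝 (∫ t : ℝ, ψ t * F (x + 2 * π * I * t))) := by
  have continuousOn_integral : ContinuousOn
      (fun σ : ℝ ↦ ∫ t : ℝ, ψ t * F (σ + 2 * π * I * t)) (Ici x) := by
    refine continuousOn_integral_of_compact_support hψ_supp ?_ ?_
    · refine (by fun_prop : Continuous fun p : ℝ × ℝ ↦ ψ p.2).continuousOn.mul (hF.comp ?_ ?_)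
      · fun_prop
      · rintro ⟨σ, t⟩ ⟨hσ, -⟩
        simpa using hσ
    · intro σ t _ ht
      rw [image_eq_zero_of_notMem_tsupport ht, zero_mul]
  exact (continuousOn_integral x self_mem_Ici).mono Ioi_subset_Ici_self

variable {f : ℕ → ℂ} {A : ℂ} {F : ℂ → ℂ}

theorem tsum_lSeriesTerm_mul_fourier_log_eq (hf : ∀ s : ℂ, 1 < s.re → LSeriesSummable f s)
    (hFf : ∀ s : ℂ, 1 < s.re → LSeries f s = F s + A / (s - 1))
    (hF : ContinuousOn F {s | 1 ≤ s.re}) (hψ : Continuous ψ) (hψ_supp : HasCompactSupport ψ)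
    {σ : ℝ} (hσ : 1 < σ) :
    ∑' n, LSeries.term f σ n * 𝓕 ψ (Real.log n) =
      A * (∫ u in Ioi (0 : ℝ), Complex.exp (-(σ - 1 : ℝ) * u) * 𝓕 ψ u) +
        ∫ t : ℝ, ψ t * F (σ + 2 * π * I * t) := by
  have hψ_int : Integrable ψ := hψ.integrable_of_hasCompactSupport hψ_supp
  have line_re (t : ℝ) : (σ + 2 * π * I * t : ℂ).re = σ := by simp
  have pole_continuous :
      Continuous fun t : ℝ ↦ (1 : ℂ) / ((σ - 1 : ℝ) + 2 * π * I * t) := by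
    refine continuous_const.div (by fun_prop) fun t h ↦ ?_
    simpa [sub_eq_zero, hσ.ne'] using congrArg Complex.re h
  have F_continuous : Continuous fun t : ℝ ↦ F (σ + 2 * π * I * t) :=
    hF.comp_continuous (by fun_prop) fun t ↦ by simpa using hσ.le
  calc ∑' n, LSeries.term f σ n * 𝓕 ψ (Real.log n)
      = ∫ t : ℝ, ψ t * LSeries f (σ + 2 * π * I * t) :=
        (hasSum_lSeriesTerm_mul_fourier_log (hf σ (by simpa using hσ)) hψ_int).tsum_eq
    _ = ∫ t : ℝ, (A * (ψ t * (1 / ((σ - 1 : ℝ) + 2 * π * I * t))) +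
          ψ t * F (σ + 2 * π * I * t)) := by
        congr! 2 with t
        rw [hFf _ (by rwa [line_re]), Complex.ofReal_sub, Complex.ofReal_one, ← add_sub_right_comm]
        ring
    _ = _ := by
        rw [integral_add, integral_const_mul,
          setIntegral_Ioi_exp_neg_mul_fourier hψ_int (by simpa using hσ)]
        · exact ((hψ.mul pole_continuous).integrable_of_hasCompactSupport
            hψ_supp.mul_right).const_mul A
        · exact (hψ.mul F_continuous).integrable_of_hasCompactSupport hψ_supp.mul_right

theorem tendsto_tsum_lSeriesTerm_mul_fourier_log (hf : ∀ s : ℂ, 1 < s.re → LSeriesSummable f s)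
    (hFf : ∀ s : ℂ, 1 < s.re → LSeries f s = F s + A / (s - 1))
    (hF : ContinuousOn F {s | 1 ≤ s.re}) (hψ : Continuous ψ) (hψ_supp : HasCompactSupport ψ)
    (hψ_fourier : Integrable (𝓕 ψ)) :
    Tendsto (fun σ : ℝ ↦ ∑' n, LSeries.term f σ n * 𝓕 ψ (Real.log n)) (𝓝[>] 1)
      (𝓝 (A * (∫ u in Ioi (0 : ℝ), 𝓕 ψ u) +
        ∫ t : ℝ, ψ t * F (1 + 2 * π * I * t))) := by
  have sub_one_tendsto : Tendsto (fun σ : ℝ ↦ σ - 1) (𝓝[>] 1) (𝓝[>] 0) := by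
    refine tendsto_nhdsWithin_iff.2 ⟨tendsto_nhdsWithin_of_tendsto_nhds ?_, ?_⟩
    · simpa using (continuous_sub_right (1 : ℝ)).tendsto 1
    · filter_upwards [self_mem_nhdsWithin] with σ (hσ : 1 < σ) using sub_pos.2 hσ
  have pole_part := (tendsto_setIntegral_Ioi_exp_neg_mul hψ_fourier.integrableOn).comp
    sub_one_tendsto
  have continuous_part := tendsto_integral_mul_add_two_pi_I_mul (x := 1) (mod_cast hF) hψ hψ_supp
  rw [Complex.ofReal_one] at continuous_part
  refine ((pole_part.const_mul A).add continuous_part).congr' ?_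
  filter_upwards [self_mem_nhdsWithin] with σ hσ
  exact (tsum_lSeriesTerm_mul_fourier_log_eq hf hFf hF hψ hψ_supp hσ).symm

theorem integral_fourier (hφ : Continuous φ) (hφ_int : Integrable φ)
    (hφ_fourier : Integrable (𝓕 φ)) : ∫ u, 𝓕 φ u = φ 0 := by
  have inversion := congrFun (hφ.fourierInv_fourier_eq hφ_int hφ_fourier) 0
  simpa [Real.fourierInv_eq'] using inversion

theorem tendsto_setIntegral_Ioi_sub_atTop {g : ℝ → ℂ} (hg : Integrable g) :
    Tendsto (fun L : ℝ ↦ ∫ u in Ioi 0, g (u - L)) atTop (𝓝 (∫ u, g u)) := by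
  have translate (L : ℝ) : ∫ u in Ioi 0, g (u - L) = ∫ u in Ioi (-L), g u := by
    rw [← (measurePreserving_sub_right volume L).setIntegral_preimage_emb
      (measurableEmbedding_subRight L) g]
    simp
  have iUnion_Ioi_neg : ⋃ L : ℝ, Ioi (-L) = univ :=
    iUnion_eq_univ_iff.2 fun u ↦ ⟨-u + 1, by simp⟩
  simp only [translate]
  rw [← setIntegral_univ (f := g), ← iUnion_Ioi_neg]
  exact tendsto_setIntegral_of_monotone (fun _ ↦ measurableSet_Ioi)
    (fun _ _ h ↦ Ioi_subset_Ioi (neg_le_neg h)) hg.integrableOn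

theorem tendsto_setIntegral_Ioi_fourier_fourierChar_smul_atTop (hφ : Continuous φ)
    (hφ_int : Integrable φ) (hφ_fourier : Integrable (𝓕 φ)) :
    Tendsto (fun L : ℝ ↦ ∫ u in Ioi (0 : ℝ), 𝓕 (fun t ↦ 𝐞 (t * L) • φ t) u) atTop
      (𝓝 (φ 0)) := by
  simp only [fourier_fourierChar_smul]
  rw [← integral_fourier hφ hφ_int hφ_fourier]
  exact tendsto_setIntegral_Ioi_sub_atTop hφ_fourier

theorem tendsto_integral_fourierChar_smul_mul_atTop (φ G : ℝ → ℂ) :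
    Tendsto (fun L : ℝ ↦ ∫ t : ℝ, (𝐞 (t * L) • φ t) * G t) atTop (𝓝 0) := by
  have riemann_lebesgue := (Real.tendsto_integral_exp_smul_cocompact fun t ↦ φ t * G t).comp
    (tendsto_neg_atTop_atBot.mono_right atBot_le_cocompact)
  simpa only [Function.comp_def, mul_neg, neg_neg, smul_mul_assoc] using riemann_lebesgue

theorem integrable_fourier_fourierChar_smul (hφ_fourier : Integrable (𝓕 φ)) (L : ℝ) :
    Integrable (𝓕 fun t ↦ 𝐞 (t * L) • φ t) := by
  rw [funext (fourier_fourierChar_smul φ L)]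
  exact hφ_fourier.comp_sub_right L

end Tauberian

section Kernel

/-- A compactly supported kernel `φ` for localizing within `η`: as `∫ 𝓕 φ = φ 0` has positive real
part but `𝓕 φ` has nonpositive real part outside `(-η, η)`, a sum of nonnegative weights against
`𝓕 φ` can only have positive real part if it sees a weight in `(-η, η)`. -/
structure IsOneSidedKernel (η : ℝ) (φ : ℝ → ℂ) : Prop where
  continuous : Continuous φ
  hasCompactSupport : HasCompactSupport φ
  integrable_fourier : Integrable (𝓕 φ)
  zero_re_pos : 0 < (φ 0).re
  fourier_re_nonpos : ∀ w, η ≤ |w| → (𝓕 φ w).re ≤ 0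

theorem fourier_comp_mul_left (φ : ℝ → ℂ) {c : ℝ} (hc : c ≠ 0) (w : ℝ) :
    𝓕 (fun t ↦ φ (c * t)) w = |c⁻¹| • 𝓕 φ (c⁻¹ * w) := by
  rw [Real.fourier_real_eq, Real.fourier_real_eq, ← Measure.integral_comp_mul_left _ c]
  congr with t
  congr 3
  field_simp

theorem IsOneSidedKernel.comp_mul_left {η c : ℝ} {φ : ℝ → ℂ} (hφ : IsOneSidedKernel η φ)
    (hc : 0 < c) : IsOneSidedKernel (c * η) (fun t ↦ φ (c * t)) where
  continuous := hφ.continuous.comp (continuous_const_mul c)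
  hasCompactSupport := hφ.hasCompactSupport.comp_homeomorph (Homeomorph.mulLeft₀ c hc.ne')
  integrable_fourier := by
    rw [funext (fourier_comp_mul_left φ hc.ne')]
    exact (hφ.integrable_fourier.comp_mul_left' (inv_ne_zero hc.ne')).smul |c⁻¹|
  zero_re_pos := by simpa using hφ.zero_re_pos
  fourier_re_nonpos w hw := by
    rw [fourier_comp_mul_left φ hc.ne', Complex.smul_re]
    refine smul_nonpos_of_nonneg_of_nonpos (abs_nonneg _) (hφ.fourier_re_nonpos _ ?_)
    rwa [abs_mul, abs_of_pos (inv_pos.2 hc), le_inv_mul_iff₀ hc]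

theorem fourier_ofReal_im_eq_zero {h : ℝ → ℝ} (h_even : Function.Even h) (w : ℝ) :
    (𝓕 (fun t ↦ (h t : ℂ)) w).im = 0 := by
  rw [← Complex.conj_eq_iff_im, Real.fourier_real_eq, ← integral_conj,
    ← integral_neg_eq_self]
  congr with t
  simp [Circle.smul_def, h_even t, ← Circle.coe_inv_eq_conj, ← AddChar.map_neg_eq_inv]

theorem exists_schwartzMap_fourier_re_nonneg :
    ∃ k : 𝓢(ℝ, ℂ), HasCompactSupport k ∧ 0 < (k 0).re ∧ ∀ w, 0 ≤ (𝓕 k w).re := by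
  let b : ContDiffBump (0 : ℝ) := default
  let h : ℝ → ℂ := fun t ↦ b t
  have b_even : Function.Even b := fun t ↦ b.neg t
  have h_smooth : ContDiff ℝ ∞ h := Complex.ofRealCLM.contDiff.comp b.contDiff
  have h_supp : HasCompactSupport h := b.hasCompactSupport.comp_left Complex.ofReal_zero
  have h_int : Integrable h := h_smooth.continuous.integrable_of_hasCompactSupport h_supp
  have conv_supp : HasCompactSupport (h ⋆[ContinuousLinearMap.mul ℂ ℂ] h) :=
    h_supp.convolution _ h_supp
  have conv_smooth : ContDiff ℝ ∞ (h ⋆[ContinuousLinearMap.mul ℂ ℂ] h) :=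
    h_supp.contDiff_convolution_right (ContinuousLinearMap.mul ℝ ℂ) h_int.locallyIntegrable h_smooth
  refine ⟨conv_supp.toSchwartzMap conv_smooth, conv_supp, ?_, fun w ↦ ?_⟩
  · have conv_zero : (h ⋆[ContinuousLinearMap.mul ℂ ℂ] h) 0 = (∫ t, b t * b t : ℝ) := by
      rw [← integral_complex_ofReal]
      simp [convolution_def, h, b_even _]
    change 0 < ((h ⋆[ContinuousLinearMap.mul ℂ ℂ] h) 0).re
    rw [conv_zero, Complex.ofReal_re]
    refine (b.continuous.mul b.continuous).integral_pos_of_hasCompactSupport_nonneg_nonzero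
      b.hasCompactSupport.mul_left (fun t ↦ mul_self_nonneg _) (x := 0) ?_
    exact mul_self_ne_zero.2 (b.pos_of_mem_ball (Metric.mem_ball_self b.rOut_pos)).ne'
  · have fourier_conv : 𝓕 (h ⋆[ContinuousLinearMap.mul ℂ ℂ] h) w = 𝓕 h w * 𝓕 h w :=
      Real.fourier_mul_convolution_eq h_int h_int w
    change 0 ≤ (𝓕 (h ⋆[ContinuousLinearMap.mul ℂ ℂ] h) w).re
    rw [fourier_conv, Complex.mul_re, fourier_ofReal_im_eq_zero b_even, mul_zero, sub_zero]
    exact mul_self_nonneg _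

theorem fourier_derivCLM_apply (k : 𝓢(ℝ, ℂ)) (w : ℝ) :
    𝓕 (derivCLM ℝ ℂ k) w = 2 * π * I * w * 𝓕 k w :=
  congrFun (Real.fourier_deriv k.integrable k.differentiable (derivCLM ℝ ℂ k).integrable) w

theorem fourier_add_smul_derivCLM_derivCLM_apply (k : 𝓢(ℝ, ℂ)) {η : ℝ} (hη : η ≠ 0) (w : ℝ) :
    𝓕 (k + ((2 * π * η) ^ 2)⁻¹ • derivCLM ℝ ℂ (derivCLM ℝ ℂ k)) w =
      (1 - w ^ 2 / η ^ 2 : ℝ) * 𝓕 k w := by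
  rw [FourierTransform.fourier_add, FourierTransform.fourier_smul, add_apply,
    smul_apply, fourier_derivCLM_apply, fourier_derivCLM_apply, Complex.real_smul]
  push_cast
  have pi_ne_zero : (π : ℂ) ≠ 0 := mod_cast Real.pi_ne_zero
  have hη' : (η : ℂ) ≠ 0 := mod_cast hη
  field_simp
  linear_combination (w : ℂ) ^ 2 * 𝓕 k w * Complex.I_sq

theorem exists_pos_exists_isOneSidedKernel : ∃ η > 0, ∃ φ, IsOneSidedKernel η φ := by
  obtain ⟨k, k_supp, k_zero_pos, k_fourier_nonneg⟩ := exists_schwartzMap_fourier_re_nonneg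
  let φ (η : ℝ) : 𝓢(ℝ, ℂ) := k + ((2 * π * η) ^ 2)⁻¹ • derivCLM ℝ ℂ (derivCLM ℝ ℂ k)
  have φ_zero_tendsto : Tendsto (fun η ↦ (φ η 0).re) atTop (𝓝 (k 0).re) := by
    have coeff_tendsto : Tendsto (fun η : ℝ ↦ ((2 * π * η) ^ 2)⁻¹) atTop (𝓝 0) :=
      ((tendsto_pow_atTop two_ne_zero).comp
        (tendsto_id.const_mul_atTop Real.two_pi_pos)).inv_tendsto_atTop
    have φ_zero_re (η : ℝ) : (φ η 0).re =
        (k 0).re + ((2 * π * η) ^ 2)⁻¹ * (derivCLM ℝ ℂ (derivCLM ℝ ℂ k) 0).re := by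
      simp only [φ, add_apply, smul_apply, Complex.add_re, Complex.smul_re, smul_eq_mul]
    simp only [φ_zero_re]
    simpa only [zero_mul, add_zero] using (coeff_tendsto.mul_const _).const_add (k 0).re
  obtain ⟨η, hη, φ_zero_pos⟩ := ((eventually_gt_atTop 0).and
    (φ_zero_tendsto.eventually_const_lt k_zero_pos)).exists
  refine ⟨η, hη, φ η, (φ η).continuous, ?_, (𝓕 (φ η)).integrable, φ_zero_pos, fun w hw ↦ ?_⟩
  · exact k_supp.add k_supp.deriv.deriv.smul_left
  · have factor_nonpos : 1 - w ^ 2 / η ^ 2 ≤ 0 := by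
      rw [sub_nonpos, one_le_div (by positivity)]
      exact sq_le_sq.2 (by rwa [abs_of_pos hη])
    rw [← SchwartzMap.fourier_coe, fourier_add_smul_derivCLM_derivCLM_apply k hη.ne',
      Complex.re_ofReal_mul]
    exact mul_nonpos_of_nonpos_of_nonneg factor_nonpos (k_fourier_nonneg w)

theorem exists_isOneSidedKernel {η : ℝ} (hη : 0 < η) : ∃ φ, IsOneSidedKernel η φ := by
  obtain ⟨η₀, hη₀, φ, hφ⟩ := exists_pos_exists_isOneSidedKernel
  have scaled := hφ.comp_mul_left (div_pos hη hη₀)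
  rw [div_mul_cancel₀ _ hη₀.ne'] at scaled
  exact ⟨_, scaled⟩

end Kernel

open scoped ComplexOrder in
theorem tsum_lSeriesTerm_mul_re_nonpos {a : ℕ → ℝ} (ha : ∀ n, 0 ≤ a n) {c : ℕ → ℂ}
    (hc : ∀ n, a n ≠ 0 → (c n).re ≤ 0) {σ : ℝ}
    (h_sum : Summable fun n ↦ LSeries.term (fun n ↦ (a n : ℂ)) σ n * c n) :
    (∑' n, LSeries.term (fun n ↦ (a n : ℂ)) σ n * c n).re ≤ 0 := by
  rw [Complex.re_tsum h_sum]
  refine tsum_nonpos fun n ↦ ?_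
  obtain ⟨term_re, term_im⟩ := Complex.nonneg_iff.1
    (LSeries.term_nonneg (a := fun n ↦ (a n : ℂ)) (n := n) (by simpa using ha n) σ)
  rw [Complex.mul_re, ← term_im, zero_mul, sub_zero]
  by_cases han : a n = 0
  · simp [LSeries.term_def, han]
  · exact mul_nonpos_of_nonneg_of_nonpos term_re (hc n han)

theorem eventually_exists_ne_zero_abs_log_sub_lt {a : ℕ → ℝ} (ha : ∀ n, 0 ≤ a n) {A : ℝ}
    (hA : 0 < A) {F : ℂ → ℂ} (h_sum : ∀ s : ℂ, 1 < s.re → LSeriesSummable (fun n ↦ (a n : ℂ)) s)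
    (hFa : ∀ s : ℂ, 1 < s.re → LSeries (fun n ↦ (a n : ℂ)) s = F s + A / (s - 1))
    (hF : ContinuousOn F {s | 1 ≤ s.re}) {η : ℝ} (hη : 0 < η) :
    ∀ᶠ L : ℝ in atTop, ∃ n : ℕ, a n ≠ 0 ∧ |Real.log n - L| < η := by
  obtain ⟨φ, hφ⟩ := exists_isOneSidedKernel hη
  have hφ_int : Integrable φ :=
    hφ.continuous.integrable_of_hasCompactSupport hφ.hasCompactSupport
  have limit_pos : 0 < ((A : ℂ) * φ 0).re := by
    rw [Complex.re_ofReal_mul]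
    exact mul_pos hA hφ.zero_re_pos
  have limit_L := ((tendsto_setIntegral_Ioi_fourier_fourierChar_smul_atTop hφ.continuous hφ_int
    hφ.integrable_fourier).const_mul (A : ℂ)).add
      (tendsto_integral_fourierChar_smul_mul_atTop φ fun t ↦ F (1 + 2 * π * I * t))
  rw [add_zero] at limit_L
  filter_upwards [((Complex.continuous_re.tendsto _).comp limit_L).eventually_const_lt limit_pos]
    with L hL
  by_contra! h_far
  let ψ : ℝ → ℂ := fun t ↦ 𝐞 (t * L) • φ t
  have hψ : Continuous ψ := by
    have := hφ.continuous
    fun_prop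
  have hψ_supp : HasCompactSupport ψ := hφ.hasCompactSupport.smul_left
  have limit_σ := tendsto_tsum_lSeriesTerm_mul_fourier_log h_sum hFa hF hψ hψ_supp
    (integrable_fourier_fourierChar_smul hφ.integrable_fourier L)
  refine hL.not_ge (le_of_tendsto ((Complex.continuous_re.tendsto _).comp limit_σ) ?_)
  filter_upwards [self_mem_nhdsWithin] with σ (hσ : 1 < σ)
  refine tsum_lSeriesTerm_mul_re_nonpos ha (fun n hn ↦ ?_)
    (hasSum_lSeriesTerm_mul_fourier_log (h_sum σ (by simpa using hσ))
      (hψ.integrable_of_hasCompactSupport hψ_supp)).summable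
  rw [fourier_fourierChar_smul]
  exact hφ.fourier_re_nonpos _ (h_far n hn)

section PrimePowers

open ArithmeticFunction

theorem exists_continuousOn_lSeries_vonMangoldt_eq_add :
    ∃ F : ℂ → ℂ, ContinuousOn F {s | 1 ≤ s.re} ∧ ∀ s : ℂ, 1 < s.re →
      LSeries (fun n ↦ (Λ n : ℂ)) s = F s + (1 : ℝ) / (s - 1) := by
  have residueClass_eq (n : ℕ) : vonMangoldt.residueClass (1 : ZMod 1) n = Λ n :=
    indicator_of_mem (s := {n : ℕ | (n : ZMod 1) = 1}) (Subsingleton.elim _ _) _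
  refine ⟨_, vonMangoldt.continuousOn_LFunctionResidueClassAux (1 : ZMod 1),
    fun s hs ↦ ?_⟩
  rw [vonMangoldt.eqOn_LFunctionResidueClassAux isUnit_one hs]
  simp [residueClass_eq]

theorem eventually_exists_isPrimePow_mem_Icc {c : ℝ} (hc : 1 < c) :
    ∀ᶠ x : ℝ in atTop, ∃ q : ℕ, IsPrimePow q ∧ (q : ℝ) ∈ Icc x (c * x) := by
  obtain ⟨F, hF, hFΛ⟩ := exists_continuousOn_lSeries_vonMangoldt_eq_add
  have log_c_pos := Real.log_pos hc
  have near_log := eventually_exists_ne_zero_abs_log_sub_lt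
    (fun _ ↦ vonMangoldt_nonneg) one_pos
    (fun _ hs ↦ LSeriesSummable_vonMangoldt hs) hFΛ hF (half_pos log_c_pos)
  have shifted_log_tendsto : Tendsto (fun x ↦ Real.log x + Real.log c / 2) atTop atTop :=
    tendsto_atTop_add_const_right _ _ Real.tendsto_log_atTop
  filter_upwards [shifted_log_tendsto.eventually near_log, eventually_gt_atTop 0]
    with x ⟨q, hΛq, hq_near⟩ hx
  have hq : IsPrimePow q := vonMangoldt_ne_zero_iff.1 hΛq
  have hq_pos : (0 : ℝ) < q := mod_cast hq.pos
  obtain ⟨lower, upper⟩ := abs_lt.1 hq_near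
  refine ⟨q, hq, (Real.log_le_log_iff hx hq_pos).1 (by linarith), ?_⟩
  rw [← Real.log_le_log_iff hq_pos (by positivity), Real.log_mul (by positivity) hx.ne']
  linarith

end PrimePowers

theorem one_div_sqrt_two_sub_mul_le {ε r : ℝ} (hε : 0 < ε) (hr : 8 / ε ≤ r) :
    (1 / √2 - ε) * r * (√2 * ((1 + ε) * (r + 2))) ≤ r ^ 2 := by
  have hr_pos : 0 < r := (by positivity : 0 < 8 / ε).trans_le hr
  have shift : (1 - ε / 4) * (r + 2) ≤ r := by
    have := (div_le_iff₀ hε).1 hr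
    linarith
  have rate : (1 - √2 * ε) * (1 + ε) ≤ 1 - ε / 4 := by
    have : 5 / 4 ≤ √2 := Real.le_sqrt_of_sq_le (by norm_num)
    nlinarith [mul_pos hε hε]
  calc (1 / √2 - ε) * r * (√2 * ((1 + ε) * (r + 2)))
      = (1 - √2 * ε) * (1 + ε) * (r + 2) * r := by
        field_simp
    _ ≤ (1 - ε / 4) * (r + 2) * r := by gcongr
    _ ≤ r * r := by gcongr
    _ = r ^ 2 := (sq r).symm

theorem exists_isDDC_mdist_le_of_isPrimePow_mem_Icc {ε : ℝ} (hε : 0 < ε) {q r : ℕ}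
    (hr : 8 / ε ≤ r) (hq : IsPrimePow q)
    (hqr : (q : ℝ) ∈ Icc ((r + 2) / √2) ((1 + ε) * ((r + 2) / √2))) :
    ∃ D : Finset (ℤ × ℤ), IsDDC (D : Set (ℤ × ℤ)) ∧ (∀ p ∈ D, ∀ p' ∈ D, mdist p p' ≤ r) ∧
      (1 / √2 - ε) * r ≤ D.card := by
  obtain ⟨lower, upper⟩ := hqr
  rw [div_le_iff₀ (by positivity)] at lower
  rw [← mul_div_assoc, le_div_iff₀ (by positivity)] at upper
  have sqrt_two_sq : √2 * √2 = 2 := Real.mul_self_sqrt zero_le_two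
  have hrq : (r + 2) ^ 2 ≤ 2 * q ^ 2 := by
    have sq_lower : ((r : ℝ) + 2) ^ 2 ≤ 2 * (q : ℝ) ^ 2 := by
      calc ((r : ℝ) + 2) ^ 2 ≤ (q * √2) ^ 2 := by gcongr
        _ = 2 * (q : ℝ) ^ 2 := by linear_combination (q : ℝ) ^ 2 * sqrt_two_sq
    exact_mod_cast sq_lower
  obtain ⟨D, hD, hD_dist, hD_card⟩ := exists_isDDC_mdist_le hq hrq
  refine ⟨D, hD, hD_dist, le_of_mul_le_mul_right (a := √2 * ((1 + ε) * (r + 2))) ?_ (by positivity)⟩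
  calc (1 / √2 - ε) * r * (√2 * ((1 + ε) * (r + 2))) ≤ (r : ℝ) ^ 2 :=
        one_div_sqrt_two_sub_mul_le hε hr
    _ ≤ 2 * (q * D.card) := mod_cast hD_card
    _ = D.card * (√2 * (q * √2)) := by linear_combination -(q * D.card : ℝ) * sqrt_two_sq
    _ ≤ D.card * (√2 * ((1 + ε) * (r + 2))) := by gcongr

/-- Lower bound matching the upper bound asymptotically: for every `ε > 0` and all
sufficiently large `r` there is a distinct difference configuration with pairwise Manhattan
distance at most `r` containing at least `(1/√2 − ε)·r` dots. -/
theorem stmt_19 (ε : ℝ) (hε : 0 < ε) :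
    ∃ r₀ : ℕ, 0 < r₀ ∧ ∀ r : ℕ, r₀ ≤ r →
      ∃ D : Finset (ℤ × ℤ), IsDDC (D : Set (ℤ × ℤ)) ∧
        (∀ p ∈ D, ∀ q ∈ D, mdist p q ≤ (r : ℤ)) ∧
        (1 / Real.sqrt 2 - ε) * (r : ℝ) ≤ (D.card : ℝ) := by
  have scale_tendsto : Tendsto (fun r : ℕ ↦ ((r : ℝ) + 2) / √2) atTop atTop :=
    (tendsto_atTop_add_const_right _ 2 tendsto_natCast_atTop_atTop).atTop_div_const (by positivity)
  have prime_power_near := scale_tendsto.eventually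
    (eventually_exists_isPrimePow_mem_Icc (lt_add_of_pos_right 1 hε))
  have r_large : ∀ᶠ r : ℕ in atTop, 8 / ε ≤ r :=
    tendsto_natCast_atTop_atTop.eventually_ge_atTop (8 / ε)
  obtain ⟨r₀, hr₀⟩ := eventually_atTop.1 (prime_power_near.and r_large)
  refine ⟨r₀ + 1, r₀.succ_pos, fun r hr ↦ ?_⟩
  obtain ⟨⟨q, hq, hqr⟩, hr_large⟩ := hr₀ r (Nat.le_of_succ_le hr)
  exact exists_isDDC_mdist_le_of_isPrimePow_mem_Icc hε hr_large hq hqr
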